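/- If ξ is an absolutely continuous vector field along γ|[0,s*] with ∫_0^{s*} (E−V(γ)) g(Dξ/ds, Dξ/ds) ds < ∞ and ξ(s*) = W, then ξ is bounded, and its sup norm satisfies ‖ξ‖_∞ ≤ ‖W‖ + ( ∫_0^{s*} (E−V(γ)) ‖Dξ/ds‖² ds )^{1/2} ( ∫_0^{s*} ‖γ̇‖² ds )^{1/2}, where ∫_0^{s*} ‖γ̇‖² ds is finite since ‖γ̇(s)‖ behaves like s^{−1/3} as s → 0⁺. -/

import Mathlib

open MeasureTheory Set Matrix Filter Topology

namespace JacobiPaper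

noncomputable section

/-- Points/vectors of the ambient space `ℝ^N` in which the manifold `M` is
topologically embedded as an open subset. -/
abbrev Vec (N : ℕ) := Fin N → ℝ

variable {N : ℕ}

/-- The inner product determined by a field of matrices `g` at the point `x`. -/
def gP (g : Vec N → Matrix (Fin N) (Fin N) ℝ) (x v w : Vec N) : ℝ :=
  ∑ i, ∑ j, g x i j * v i * w j

/-- The Euclidean gradient (the differential, as a vector). -/
def euclGrad (V : Vec N → ℝ) (x : Vec N) : Vec N :=
  fun i => fderiv ℝ V x (Pi.single i 1)

/-- The setting of the paper: a `C³` Riemannian metric `g` on a neighborhood `U` of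
the compact sublevel `V⁻¹((-∞,E])`, with `V` of class `C²` there and `E` a regular
value of `V`. -/
structure Setting (N : ℕ) where
  g : Vec N → Matrix (Fin N) (Fin N) ℝ
  V : Vec N → ℝ
  E : ℝ
  U : Set (Vec N)
  hdim : 1 ≤ N
  hU : IsOpen U
  hsub : {x | V x ≤ E} ⊆ U
  hgC : ∀ i j, ContDiffOn ℝ 3 (fun x => g x i j) U
  hgsymm : ∀ x ∈ U, ∀ i j, g x i j = g x j i
  hgpos : ∀ x ∈ U, ∀ v : Vec N, v ≠ 0 → 0 < gP g x v v
  hVC : ContDiffOn ℝ 2 V U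
  hreg : ∀ x, V x = E → euclGrad V x ≠ 0
  hcomp : IsCompact {x : Vec N | V x ≤ E}

namespace Setting

variable (S : Setting N)

/-- The Riemannian inner product `g_x(v,w)`. -/
def prod (x v w : Vec N) : ℝ := gP S.g x v w

/-- The Riemannian norm `‖v‖_x`. -/
def gnorm (x v : Vec N) : ℝ := Real.sqrt (S.prod x v v)

/-- The gradient of `V` with respect to `g`. -/
def grad (x : Vec N) : Vec N := (S.g x)⁻¹ *ᵥ euclGrad S.V x

/-- Christoffel symbols `Γ^k_{ij}` of the Levi-Civita connection of `g`. -/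
def christoffel (x : Vec N) (k i j : Fin N) : ℝ :=
  (1/2) * ∑ l, (S.g x)⁻¹ k l *
    (fderiv ℝ (fun y => S.g y l j) x (Pi.single i 1)
     + fderiv ℝ (fun y => S.g y l i) x (Pi.single j 1)
     - fderiv ℝ (fun y => S.g y i j) x (Pi.single l 1))

/-- Covariant derivative, along the curve `q` with velocity `q'`, of the vector field
`ξ` whose (pointwise) derivative is `ξ'`. -/
def covD (q q' ξ ξ' : ℝ → Vec N) (s : ℝ) : Vec N :=
  fun k => ξ' s k + ∑ i, ∑ j, S.christoffel (q s) k i j * q' s i * ξ s j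

/-- The Riemann curvature tensor `R(u,v)w` of `g` at `x`. -/
def curv (x u v w : Vec N) : Vec N :=
  fun l => ∑ i, ∑ j, ∑ k, u i * v j * w k *
    (fderiv ℝ (fun y => S.christoffel y l j k) x (Pi.single i 1)
     - fderiv ℝ (fun y => S.christoffel y l i k) x (Pi.single j 1)
     + ∑ m, (S.christoffel x l i m * S.christoffel x m j k
             - S.christoffel x l j m * S.christoffel x m i k))

/-- The Hessian operator of `V` with respect to `g`: `ξ ↦ ∇_ξ ∇V`. -/
def hessV (x ξ : Vec N) : Vec N :=
  fun k => ∑ i, ξ i * (fderiv ℝ (fun y => S.grad y k) x (Pi.single i 1)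
    + ∑ j, S.christoffel x k i j * S.grad x j)

/-- The Jacobi-metric geodesic equation (eq. (2.5) of the paper) at the instant `s`,
for a curve `x` with derivative `x'` and second derivative `x''`. -/
def GeoEqAt (x x' x'' : ℝ → Vec N) (s : ℝ) : Prop :=
  ∀ k, (S.E - S.V (x s)) * S.covD x x' x' x'' s k
    - S.prod (x s) (S.grad (x s)) (x' s) * x' s k
    + (1/2) * S.prod (x s) (x' s) (x' s) * S.grad (x s) k = 0

end Setting

/-- `q` is of class `C²` on `I` with first derivative `q'` and second derivative `q''`. -/
def C2OnWith (q q' q'' : ℝ → Vec N) (I : Set ℝ) : Prop :=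
  (∀ t ∈ I, HasDerivWithinAt q (q' t) I t) ∧
  (∀ t ∈ I, HasDerivWithinAt q' (q'' t) I t) ∧
  ContinuousOn q'' I

/-- `x` belongs to the Sobolev space `H¹([a,b],ℝ^N)`: it is absolutely continuous
(primitive of its a.e. derivative) with square-integrable derivative. -/
def H1On (x : ℝ → Vec N) (a b : ℝ) : Prop :=
  ContinuousOn x (Icc a b) ∧
  IntegrableOn (deriv x) (Icc a b) ∧
  IntegrableOn (fun s => ‖deriv x s‖ ^ 2) (Icc a b) ∧
  ∀ t ∈ Icc a b, x t = x a + ∫ s in a..t, deriv x s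

/-- `x` is absolutely continuous on `[a,b]`. -/
def ACOn (x : ℝ → Vec N) (a b : ℝ) : Prop :=
  ContinuousOn x (Icc a b) ∧
  IntegrableOn (deriv x) (Icc a b) ∧
  ∀ t ∈ Icc a b, x t = x a + ∫ s in a..t, deriv x s

namespace Setting

variable (S : Setting N)

/-- The weak (distributional) form (eq. (2.7)) of the Jacobi geodesic equation on `(a,b)`,
tested against all `ξ ∈ C^∞_0((a,b),ℝ^N)`. -/
def WeakGeo (x : ℝ → Vec N) (a b : ℝ) : Prop :=
  ∀ ξ : ℝ → Vec N, ContDiff ℝ (⊤ : ℕ∞) ξ → tsupport ξ ⊆ Ioo a b →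
    (∫ s in a..b,
      ((S.E - S.V (x s)) * S.prod (x s) (deriv x s) (S.covD x (deriv x) ξ (deriv ξ) s)
        - (1/2) * S.prod (x s) (deriv x s) (deriv x s)
            * S.prod (x s) (S.grad (x s)) (ξ s))) = 0

/-- The space `X_Q`. -/
def InXQ (Q : Vec N) (x : ℝ → Vec N) : Prop :=
  H1On x 0 1 ∧ S.V (x 0) = S.E ∧ (∀ s ∈ Ioc (0:ℝ) 1, S.V (x s) < S.E) ∧ x 1 = Q

/-- The Jacobi length functional `L_V`. -/
def LV (x : ℝ → Vec N) : ℝ :=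
  ∫ s in (0:ℝ)..1,
    Real.sqrt ((1/2) * (S.E - S.V (x s)) * S.prod (x s) (deriv x s) (deriv x s))

/-- The distance `d_V(Q)` from `Q` to the boundary of the potential well. -/
def dV (Q : Vec N) : ℝ := sInf {r | ∃ x, S.InXQ Q x ∧ r = S.LV x}

/-- `γ : [0,a] → M` is a `g_*`-geodesic starting at `V⁻¹(E)`, staying in the potential
well for `s > 0`, parameterized by arc length (`½ g(γ̇,γ̇)(E−V(γ)) ≡ 1`). -/
def IsBdryGeo (γ : ℝ → Vec N) (a : ℝ) : Prop :=
  0 < a ∧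
  ContinuousOn γ (Icc 0 a) ∧
  (∀ s ∈ Ioc (0:ℝ) a, ContDiffAt ℝ 2 γ s) ∧
  S.V (γ 0) = S.E ∧
  (∀ s ∈ Ioc (0:ℝ) a, S.V (γ s) < S.E) ∧
  (∀ s ∈ Ioc (0:ℝ) a, S.GeoEqAt γ (deriv γ) (deriv (deriv γ)) s) ∧
  (∀ s ∈ Ioc (0:ℝ) a, (1/2) * S.prod (γ s) (deriv γ s) (deriv γ s) * (S.E - S.V (γ s)) = 1)

/-- The index form `I_{s₁,s₂}(ξ,η)` along `γ`. -/
def idxForm (γ : ℝ → Vec N) (s₁ s₂ : ℝ) (ξ η : ℝ → Vec N) : ℝ :=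
  ∫ u in s₁..s₂,
    ((S.E - S.V (γ u)) *
        (S.prod (γ u) (S.covD γ (deriv γ) ξ (deriv ξ) u) (S.covD γ (deriv γ) η (deriv η) u)
          + S.prod (γ u) (S.curv (γ u) (deriv γ u) (ξ u) (deriv γ u)) (η u))
      - (S.prod (γ u) (S.grad (γ u)) (ξ u)
            * S.prod (γ u) (deriv γ u) (S.covD γ (deriv γ) η (deriv η) u)
          + S.prod (γ u) (deriv γ u) (S.covD γ (deriv γ) ξ (deriv ξ) u)
            * S.prod (γ u) (S.grad (γ u)) (η u)
          + (1/2) * S.prod (γ u) (S.hessV (γ u) (ξ u)) (η u)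
            * S.prod (γ u) (deriv γ u) (deriv γ u)))

/-- Membership in the space `Y_s^W`: absolutely continuous vector fields along `γ|[0,s]`
with finite weighted norm, with `ξ(0) ∈ T_{γ(0)}V⁻¹(E)` and `ξ(s) = W`. -/
def InY (γ : ℝ → Vec N) (s : ℝ) (W : Vec N) (ξ : ℝ → Vec N) : Prop :=
  ACOn ξ 0 s ∧
  IntegrableOn (fun u => (S.E - S.V (γ u)) *
      S.prod (γ u) (S.covD γ (deriv γ) ξ (deriv ξ) u)
        (S.covD γ (deriv γ) ξ (deriv ξ) u)) (Icc 0 s) ∧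
  S.prod (γ 0) (S.grad (γ 0)) (ξ 0) = 0 ∧
  ξ s = W

/-- The weighted squared norm `⟨ξ,ξ⟩_{0,s}`. -/
def wNormSq (γ : ℝ → Vec N) (s : ℝ) (ξ : ℝ → Vec N) : ℝ :=
  ∫ u in (0:ℝ)..s, (S.E - S.V (γ u)) *
    S.prod (γ u) (S.covD γ (deriv γ) ξ (deriv ξ) u) (S.covD γ (deriv γ) ξ (deriv ξ) u)

/-- The Jacobi field equation (eq. (4.9)) at the instant `u`. -/
def JacobiEqAt (γ ξ : ℝ → Vec N) (u : ℝ) : Prop :=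
  ∀ k, - deriv (fun t => (S.E - S.V (γ t)) * S.covD γ (deriv γ) ξ (deriv ξ) t k) u
      + (S.E - S.V (γ u)) * S.curv (γ u) (deriv γ u) (ξ u) (deriv γ u) k
      + deriv (fun t => S.prod (γ t) (S.grad (γ t)) (ξ t) * deriv γ t k) u
      - S.prod (γ u) (deriv γ u) (S.covD γ (deriv γ) ξ (deriv ξ) u) * S.grad (γ u) k
      - (1/2) * S.prod (γ u) (deriv γ u) (deriv γ u) * S.hessV (γ u) (ξ u) k = 0

/-- `ξ` is a Jacobi field along `γ|[0,s]`: of class `C⁰([0,s]) ∩ C²((0,s])` and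
solving the Jacobi equation on `(0,s]`. -/
def IsJacobi (γ ξ : ℝ → Vec N) (s : ℝ) : Prop :=
  ContinuousOn ξ (Icc 0 s) ∧ (∀ u ∈ Ioc (0:ℝ) s, ContDiffAt ℝ 2 ξ u) ∧
  ∀ u ∈ Ioc (0:ℝ) s, S.JacobiEqAt γ ξ u

/-- The boundary condition (eq. (4.10)): the continuous extension at `s = 0` of
`(E−V(γ))Dξ/ds − g(∇V(γ),ξ)γ̇` is parallel to `∇V(γ(0))`. -/
def BdryCond (γ ξ : ℝ → Vec N) : Prop :=
  ∃ c : ℝ, Tendsto (fun u => (fun k => (S.E - S.V (γ u)) * S.covD γ (deriv γ) ξ (deriv ξ) u k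
      - S.prod (γ u) (S.grad (γ u)) (ξ u) * deriv γ u k))
    (nhdsWithin 0 (Ioi 0)) (nhds (c • S.grad (γ 0)))

end Setting

/-- The family `ξ : Fin n → (ℝ → Vec N)` is linearly independent as fields on `I`. -/
def IndepOn {n : ℕ} (I : Set ℝ) (ξ : Fin n → ℝ → Vec N) : Prop :=
  ∀ c : Fin n → ℝ, (∀ u ∈ I, (∑ i, c i • ξ i) u = 0) → c = 0

/-- The index of the quadratic form `B` on the class `C` of vector fields (regarded as
fields on `I`) is at least `n`. -/
def IndexGe {N : ℕ} (B : (ℝ → Vec N) → ℝ) (C : (ℝ → Vec N) → Prop) (I : Set ℝ) (n : ℕ) : Prop :=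
  ∃ ξ : Fin n → ℝ → Vec N, (∀ i, C (ξ i)) ∧ IndepOn I ξ ∧
    ∀ c : Fin n → ℝ, c ≠ 0 → B (∑ i, c i • ξ i) < 0

/-- The index of the quadratic form `B` on the class `C` equals `n`. -/
def IndexEq {N : ℕ} (B : (ℝ → Vec N) → ℝ) (C : (ℝ → Vec N) → Prop) (I : Set ℝ) (n : ℕ) : Prop :=
  IndexGe B C I n ∧ ¬ IndexGe B C I (n+1)

/-- The nullity of a bilinear form `B` on the class `C` is at least `n`. -/
def NullGe {N : ℕ} (B : (ℝ → Vec N) → (ℝ → Vec N) → ℝ) (C : (ℝ → Vec N) → Prop)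
    (I : Set ℝ) (n : ℕ) : Prop :=
  ∃ ξ : Fin n → ℝ → Vec N, (∀ i, C (ξ i)) ∧ IndepOn I ξ ∧
    ∀ i, ∀ η, C η → B (ξ i) η = 0

/-- The nullity of a bilinear form `B` on the class `C` equals `n`. -/
def NullEq {N : ℕ} (B : (ℝ → Vec N) → (ℝ → Vec N) → ℝ) (C : (ℝ → Vec N) → Prop)
    (I : Set ℝ) (n : ℕ) : Prop :=
  NullGe B C I n ∧ ¬ NullGe B C I (n+1)

namespace Setting

variable (S : Setting N)

/-- `ξ` is a (nontrivial candidate) field realizing conjugacy at `γ(s)`: a Jacobi field in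
`Y_s` satisfying the boundary condition (4.10). -/
def ConjField (γ : ℝ → Vec N) (s : ℝ) (ξ : ℝ → Vec N) : Prop :=
  S.InY γ s 0 ξ ∧ S.IsJacobi γ ξ s ∧ S.BdryCond γ ξ

/-- `γ(s)` is conjugate to `V⁻¹(E)` with multiplicity at least `n`. -/
def MultGe (γ : ℝ → Vec N) (s : ℝ) (n : ℕ) : Prop :=
  ∃ ξ : Fin n → ℝ → Vec N, (∀ i, S.ConjField γ s (ξ i)) ∧ IndepOn (Icc 0 s) ξ

/-- `γ(s)` is conjugate to `V⁻¹(E)`. -/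
def IsConj (γ : ℝ → Vec N) (s : ℝ) : Prop := S.MultGe γ s 1

/-- `γ(s)` is conjugate to `V⁻¹(E)` with multiplicity exactly `n`. -/
def Mult (γ : ℝ → Vec N) (s : ℝ) (n : ℕ) : Prop :=
  S.MultGe γ s n ∧ ¬ S.MultGe γ s (n+1)

end Setting

/-! Write `f = E - V(γ)`. Differentiating `‖ξ‖²` gives `|d‖ξ‖/ds| ≤ ‖Dξ/ds‖`, and Cauchy–Schwarz
with the weight `f` bounds `∫ ‖Dξ/ds‖` by `(∫ f ‖Dξ/ds‖²)^{1/2} (∫ f⁻¹)^{1/2}`. Since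
`‖γ̇‖² = 2 f⁻¹`, everything rests on the integrability of `f⁻¹` near `0`. The momentum `p = f γ̇`
has `‖p‖² = 2 f`, so it vanishes at `s = 0`, and the geodesic equation reads
`ṗ = -f⁻¹ (∇V + Γ(p, p))`. Hence the component of `-p` along the nonzero covector `dV(γ(0))` is
continuous up to `s = 0` with derivative comparable to `f⁻¹`. -/

section RealAnalysis

lemma memLp_two_sqrt {α : Type*} [MeasurableSpace α] {μ : Measure α} {f : α → ℝ}
    (hf : Integrable f μ) : MemLp (fun x => √(f x)) 2 μ := by
  refine (memLp_two_iff_integrable_sq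
    (Real.continuous_sqrt.comp_aestronglyMeasurable hf.aestronglyMeasurable)).2 ?_
  simpa only [Real.sq_sqrt'] using hf.pos_part

lemma integral_sqrt_mul_sqrt_le {α : Type*} [MeasurableSpace α] {μ : Measure α} {f g : α → ℝ}
    (hf : Integrable f μ) (hg : Integrable g μ) (hf0 : 0 ≤ᵐ[μ] f) (hg0 : 0 ≤ᵐ[μ] g) :
    ∫ x, √(f x) * √(g x) ∂μ ≤ √(∫ x, f x ∂μ) * √(∫ x, g x ∂μ) := by
  have integral_sqrt_sq {h : α → ℝ} (h0 : 0 ≤ᵐ[μ] h) :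
      ∫ x, √(h x) ^ (2 : ℝ) ∂μ = ∫ x, h x ∂μ :=
    integral_congr_ae (by
      filter_upwards [h0] with x hx
      rw [Real.rpow_two, Real.sq_sqrt hx])
  have hölder := integral_mul_le_Lp_mul_Lq_of_nonneg (μ := μ) Real.HolderConjugate.two_two
    (Eventually.of_forall fun x => Real.sqrt_nonneg (f x))
    (Eventually.of_forall fun x => Real.sqrt_nonneg (g x))
    (by simpa using memLp_two_sqrt hf) (by simpa using memLp_two_sqrt hg)
  rwa [integral_sqrt_sq hf0, integral_sqrt_sq hg0, ← Real.sqrt_eq_rpow, ← Real.sqrt_eq_rpow]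
    at hölder

lemma sqrt_mul_mul_sqrt_inv {w : ℝ} (hw : 0 < w) (y : ℝ) : √(w * y) * √w⁻¹ = √y := by
  rw [← Real.sqrt_mul' _ (inv_nonneg.2 hw.le), mul_right_comm, mul_inv_cancel₀ hw.ne', one_mul]

lemma integrable_sqrt_of_weight {α : Type*} [MeasurableSpace α] {μ : Measure α} {f w : α → ℝ}
    (hw : ∀ᵐ x ∂μ, 0 < w x) (hwf : Integrable (fun x => w x * f x) μ)
    (hwinv : Integrable (fun x => (w x)⁻¹) μ) : Integrable (fun x => √(f x)) μ := by
  refine ((memLp_two_sqrt hwf).integrable_mul (memLp_two_sqrt hwinv)).congr ?_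
  filter_upwards [hw] with x hx using sqrt_mul_mul_sqrt_inv hx (f x)

lemma integral_sqrt_le_of_weight {α : Type*} [MeasurableSpace α] {μ : Measure α} {f w : α → ℝ}
    (hf : 0 ≤ᵐ[μ] f) (hw : ∀ᵐ x ∂μ, 0 < w x) (hwf : Integrable (fun x => w x * f x) μ)
    (hwinv : Integrable (fun x => (w x)⁻¹) μ) :
    ∫ x, √(f x) ∂μ ≤ √(∫ x, w x * f x ∂μ) * √(∫ x, (w x)⁻¹ ∂μ) := by
  have hcongr : (fun x => √(f x)) =ᵐ[μ] fun x => √(w x * f x) * √(w x)⁻¹ := by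
    filter_upwards [hw] with x hx using (sqrt_mul_mul_sqrt_inv hx (f x)).symm
  rw [integral_congr_ae hcongr]
  refine integral_sqrt_mul_sqrt_le hwf hwinv ?_ ?_
  · filter_upwards [hf, hw] with x hfx hwx using mul_nonneg hwx.le hfx
  · filter_upwards [hw] with x hwx using inv_nonneg.2 hwx.le

/-- `P` is continuous up to the endpoint `a`, so the nonnegative derivative `φ * G` has a finite
integral near `a`, and there it dominates `c * φ`. -/
lemma integrableOn_Ioc_of_hasDerivAt_mul {P φ G : ℝ → ℝ} {a b c : ℝ} (hab : a < b)
    (hP : ContinuousOn P (Icc a b)) (hP' : ∀ s ∈ Ioc a b, HasDerivAt P (φ s * G s) s)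
    (hφ : ContinuousOn φ (Ioc a b)) (hφ0 : ∀ s ∈ Ioc a b, 0 ≤ φ s) (hc : 0 < c)
    (hG : ∀ᶠ s in 𝓝[>] a, c ≤ G s) : IntegrableOn φ (Ioc a b) := by
  obtain ⟨δ, hδ, hGδ⟩ := (mem_nhdsGT_iff_exists_Ioc_subset).1
    (inter_mem hG (Ioc_mem_nhdsGT hab))
  have hδ' : a < δ := hδ
  have hmem {s : ℝ} (hs : s ∈ Ioc a δ) : s ∈ Ioc a b := (hGδ hs).2
  have hδb : δ ≤ b := (hmem ⟨hδ', le_rfl⟩).2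
  have hφG {s : ℝ} (hs : s ∈ Ioc a δ) : c * φ s ≤ φ s * G s := by
    rw [mul_comm]
    exact mul_le_mul_of_nonneg_left (hGδ hs).1 (hφ0 s (hmem hs))
  have hint : IntegrableOn (fun s => φ s * G s) (Ioc a δ) :=
    intervalIntegral.integrableOn_deriv_of_nonneg (hP.mono (Icc_subset_Icc_right hδb))
      (fun s hs => hP' s (hmem (Ioo_subset_Ioc_self hs)))
      fun s hs => (mul_nonneg hc.le (hφ0 s (hmem (Ioo_subset_Ioc_self hs)))).trans
        (hφG (Ioo_subset_Ioc_self hs))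
  rw [← Ioc_union_Ioc_eq_Ioc hδ'.le hδb]
  refine IntegrableOn.union ?_ ?_
  · refine (hint.const_mul c⁻¹).mono'
      ((hφ.mono fun s hs => hmem hs).aestronglyMeasurable measurableSet_Ioc) ?_
    filter_upwards [ae_restrict_mem measurableSet_Ioc] with s hs
    rw [Real.norm_of_nonneg (hφ0 s (hmem hs)), le_inv_mul_iff₀ hc]
    exact hφG hs
  · exact (hφ.mono fun s hs => ⟨hδ'.trans_le hs.1, hs.2⟩).integrableOn_Icc.mono_set
      Ioc_subset_Icc_self

end RealAnalysis

section AbsoluteContinuity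

lemma absolutelyContinuousOnInterval_congr {X : Type*} [PseudoMetricSpace X] {f g : ℝ → X}
    {a b : ℝ} (hf : AbsolutelyContinuousOnInterval f a b) (h : EqOn f g (uIcc a b)) :
    AbsolutelyContinuousOnInterval g a b := by
  refine Tendsto.congr' ?_ hf
  filter_upwards [mem_inf_of_right (mem_principal_self _)] with E hE
  exact Finset.sum_congr rfl fun i hi => by rw [h (hE.1 i hi).1, h (hE.1 i hi).2]

lemma absolutelyContinuousOnInterval_finsetSum {ι F : Type*} [SeminormedAddCommGroup F]
    (s : Finset ι) {f : ι → ℝ → F} {a b : ℝ}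
    (h : ∀ i ∈ s, AbsolutelyContinuousOnInterval (f i) a b) :
    AbsolutelyContinuousOnInterval (fun t => ∑ i ∈ s, f i t) a b := by
  classical
  induction s using Finset.induction_on with
  | empty =>
    simp only [Finset.sum_empty]
    exact (LipschitzWith.const (0 : F)).lipschitzOnWith.absolutelyContinuousOnInterval
  | insert i s hi ih =>
    simp only [Finset.sum_insert hi]
    exact (h i (Finset.mem_insert_self i s)).fun_add
      (ih fun j hj => h j (Finset.mem_insert_of_mem hj))

lemma absolutelyContinuousOnInterval_lipschitzOnWith_comp {X Y : Type*} [PseudoMetricSpace X]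
    [PseudoMetricSpace Y] {f : ℝ → X} {φ : X → Y} {a b : ℝ} {K : NNReal}
    (hφ : LipschitzOnWith K φ (f '' uIcc a b)) (hf : AbsolutelyContinuousOnInterval f a b) :
    AbsolutelyContinuousOnInterval (fun x => φ (f x)) a b := by
  refine squeeze_zero' (Eventually.of_forall fun E => Finset.sum_nonneg fun i _ => dist_nonneg)
    ?_ (by simpa only [mul_zero] using Tendsto.const_mul (K : ℝ) hf)
  filter_upwards [mem_inf_of_right (mem_principal_self _)] with E hE
  rw [Finset.mul_sum]
  exact Finset.sum_le_sum fun i hi => hφ.dist_le_mul _ (mem_image_of_mem f (hE.1 i hi).1) _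
    (mem_image_of_mem f (hE.1 i hi).2)

lemma absolutelyContinuousOnInterval_contDiffOn_comp {F : Type*} [NormedAddCommGroup F]
    [NormedSpace ℝ F] {f : ℝ → ℝ} {φ : ℝ → F} {a b : ℝ}
    (hφ : ContDiffOn ℝ 1 φ (f '' uIcc a b)) (hf : AbsolutelyContinuousOnInterval f a b) :
    AbsolutelyContinuousOnInterval (fun x => φ (f x)) a b := by
  have hconvex : Convex ℝ (f '' uIcc a b) :=
    (isPreconnected_uIcc.image f hf.continuousOn).ordConnected.convex
  obtain ⟨K, hK⟩ := hφ.exists_lipschitzOnWith one_ne_zero hconvex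
    (isCompact_uIcc.image_of_continuousOn hf.continuousOn)
  exact absolutelyContinuousOnInterval_lipschitzOnWith_comp hK hf

lemma neg_le_div_two_mul_sqrt_add {y y' ρ δ : ℝ} (hy : 0 ≤ y) (hρ : 0 ≤ ρ) (hδ : 0 < δ)
    (h : -(2 * ρ * √y) ≤ y') : -ρ ≤ y' / (2 * √(y + δ)) := by
  have hsqrt : √y ≤ √(y + δ) := Real.sqrt_le_sqrt (le_add_of_nonneg_right hδ.le)
  rw [le_div_iff₀ (by positivity)]
  nlinarith [mul_le_mul_of_nonneg_left hsqrt hρ]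

lemma sqrt_add_le_sqrt_add_add_integral {F F' ρ : ℝ → ℝ} {a b δ : ℝ} (hab : a ≤ b) (hδ : 0 < δ)
    (hF : AbsolutelyContinuousOnInterval F a b) (hF0 : ∀ t ∈ Icc a b, 0 ≤ F t)
    (hF' : ∀ᵐ t, t ∈ Icc a b → HasDerivAt F (F' t) t)
    (hρ : IntervalIntegrable ρ volume a b) (hρ0 : ∀ t ∈ Icc a b, 0 ≤ ρ t)
    (hFρ : ∀ t ∈ Icc a b, -(2 * ρ t * √(F t)) ≤ F' t) :
    √(F a + δ) ≤ √(F b + δ) + ∫ t in a..b, ρ t := by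
  have hpos {t : ℝ} (ht : t ∈ Icc a b) : 0 < F t + δ := add_pos_of_nonneg_of_pos (hF0 t ht) hδ
  have hAC : AbsolutelyContinuousOnInterval (fun t => √(F t + δ)) a b := by
    refine absolutelyContinuousOnInterval_contDiffOn_comp (φ := fun y => √(y + δ)) ?_ hF
    rintro _ ⟨t, ht, rfl⟩
    rw [uIcc_of_le hab] at ht
    exact ((contDiffAt_id.add contDiffAt_const).sqrt (hpos ht).ne').contDiffWithinAt
  have hle : ∫ t in a..b, -ρ t ≤ ∫ t in a..b, deriv (fun t => √(F t + δ)) t := by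
    refine intervalIntegral.integral_mono_ae_restrict hab hρ.neg hAC.intervalIntegrable_deriv ?_
    filter_upwards [ae_restrict_mem measurableSet_Icc, ae_restrict_of_ae hF'] with t ht hF't
    rw [(((hF't ht).add_const δ).sqrt (hpos ht).ne').deriv]
    exact neg_le_div_two_mul_sqrt_add (hF0 t ht) (hρ0 t ht) hδ (hFρ t ht)
  rw [hAC.integral_deriv_eq_sub, intervalIntegral.integral_neg] at hle
  linarith

-- `√F` need not be differentiable where `F` vanishes, so the estimate is first proved for
-- `√(F + δ)`.
lemma sqrt_le_sqrt_add_integral {F F' ρ : ℝ → ℝ} {a b : ℝ} (hab : a ≤ b)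
    (hF : AbsolutelyContinuousOnInterval F a b) (hF0 : ∀ t ∈ Icc a b, 0 ≤ F t)
    (hF' : ∀ᵐ t, t ∈ Icc a b → HasDerivAt F (F' t) t)
    (hρ : IntervalIntegrable ρ volume a b) (hρ0 : ∀ t ∈ Icc a b, 0 ≤ ρ t)
    (hFρ : ∀ t ∈ Icc a b, -(2 * ρ t * √(F t)) ≤ F' t) :
    √(F a) ≤ √(F b) + ∫ t in a..b, ρ t := by
  have hlim (y : ℝ) : Tendsto (fun δ => √(y + δ)) (𝓝[>] 0) (𝓝 √y) := by
    have hcont : Continuous fun δ => √(y + δ) := by fun_prop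
    simpa only [add_zero] using (hcont.tendsto 0).mono_left nhdsWithin_le_nhds
  refine le_of_tendsto_of_tendsto (hlim _) ((hlim _).add_const _) ?_
  filter_upwards [self_mem_nhdsWithin] with δ hδ
  exact sqrt_add_le_sqrt_add_add_integral hab hδ hF hF0 hF' hρ hρ0 hFρ

lemma ae_hasDerivAt_of_absolutelyContinuousOnInterval {ι : Type*} [Finite ι] {ξ : ℝ → ι → ℝ}
    {a b : ℝ} (h : ∀ k, AbsolutelyContinuousOnInterval (fun t => ξ t k) a b) :
    ∀ᵐ t, t ∈ uIcc a b → HasDerivAt ξ (deriv ξ t) t := by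
  have := Fintype.ofFinite ι
  filter_upwards [ae_all_iff.2 fun k => (h k).ae_differentiableAt] with t ht htI
  exact (differentiableAt_pi.2 fun k => ht k htI).hasDerivAt

lemma ACOn.absolutelyContinuousOnInterval {ξ : ℝ → Vec N} {a b : ℝ} (hab : a ≤ b)
    (h : ACOn ξ a b) (k : Fin N) : AbsolutelyContinuousOnInterval (fun t => ξ t k) a b := by
  obtain ⟨-, hint, hprim⟩ := h
  have hint : IntervalIntegrable (deriv ξ) volume a b :=
    (intervalIntegrable_iff_integrableOn_Icc_of_le hab).2 hint
  have hconst : AbsolutelyContinuousOnInterval (fun _ => ξ a k) a b :=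
    (LipschitzWith.const (ξ a k)).lipschitzOnWith.absolutelyContinuousOnInterval
  have hk : IntervalIntegrable (fun s => deriv ξ s k) volume a b :=
    ⟨hint.1.eval k, hint.2.eval k⟩
  refine absolutelyContinuousOnInterval_congr (hconst.fun_add
    (hk.absolutelyContinuousOnInterval_intervalIntegral left_mem_uIcc)) fun t ht => ?_
  rw [hprim t (by rwa [uIcc_of_le hab] at ht), Pi.add_apply, add_right_inj]
  exact (ContinuousLinearMap.proj (R := ℝ) (φ := fun _ : Fin N => ℝ) k).intervalIntegral_comp_comm
    (hint.mono_set (uIcc_subset_uIcc left_mem_uIcc ht))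

end AbsoluteContinuity

namespace Setting

section Metric

variable {S : Setting N} {x : Vec N}

lemma sum_mul_mul_eq_dotProduct_mulVec (A : Matrix (Fin N) (Fin N) ℝ) (v w : Vec N) :
    ∑ i, ∑ j, A i j * v i * w j = v ⬝ᵥ A *ᵥ w := by
  simp only [dotProduct, mulVec, Finset.mul_sum]
  exact Finset.sum_congr rfl fun i _ => Finset.sum_congr rfl fun j _ => by ring

variable (S) in
lemma prod_eq_dotProduct (x v w : Vec N) : S.prod x v w = v ⬝ᵥ S.g x *ᵥ w :=
  sum_mul_mul_eq_dotProduct_mulVec (S.g x) v w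

lemma transpose_g (hx : x ∈ S.U) : (S.g x)ᵀ = S.g x :=
  Matrix.ext fun i j => S.hgsymm x hx j i

lemma prod_comm (hx : x ∈ S.U) (v w : Vec N) : S.prod x v w = S.prod x w v := by
  rw [prod_eq_dotProduct, prod_eq_dotProduct, dotProduct_mulVec, ← mulVec_transpose,
    transpose_g hx, dotProduct_comm]

lemma prod_self_nonneg (hx : x ∈ S.U) (v : Vec N) : 0 ≤ S.prod x v v := by
  rcases eq_or_ne v 0 with rfl | hv
  · rw [prod_eq_dotProduct, zero_dotProduct]
  · exact (S.hgpos x hx v hv).le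

lemma prod_sq_le (hx : x ∈ S.U) (v w : Vec N) :
    S.prod x v w ^ 2 ≤ S.prod x v v * S.prod x w w := by
  have hB (v w : Vec N) : (S.g x).toBilin' v w = S.prod x v w := by
    rw [Matrix.toBilin'_apply', prod_eq_dotProduct]
  simp only [← hB]
  refine LinearMap.BilinForm.apply_sq_le_of_symm _ (fun v => ?_) ⟨fun v w => ?_⟩ v w
  · simpa only [hB] using prod_self_nonneg hx v
  · simpa only [hB, RingHom.id_apply] using prod_comm hx v w

lemma abs_prod_le (hx : x ∈ S.U) (v w : Vec N) : |S.prod x v w| ≤ S.gnorm x v * S.gnorm x w := by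
  rw [gnorm, gnorm, ← Real.sqrt_mul (prod_self_nonneg hx v)]
  exact Real.abs_le_sqrt (prod_sq_le hx v w)

lemma det_g_pos (hx : x ∈ S.U) : 0 < (S.g x).det := by
  refine (Matrix.PosDef.of_dotProduct_mulVec_pos
    (transpose_g hx) fun v hv => ?_).det_pos
  rw [star_trivial, ← prod_eq_dotProduct]
  exact S.hgpos x hx v hv

lemma g_mul_inv (hx : x ∈ S.U) : S.g x * (S.g x)⁻¹ = 1 :=
  Matrix.mul_nonsing_inv _ (det_g_pos hx).ne'.isUnit

lemma prod_inv_mulVec (hx : x ∈ S.U) (v z : Vec N) :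
    S.prod x v ((S.g x)⁻¹ *ᵥ z) = v ⬝ᵥ z := by
  rw [prod_eq_dotProduct, mulVec_mulVec, g_mul_inv hx, one_mulVec]

lemma sq_apply_le_prod_self_mul_inv (hx : x ∈ S.U) (v : Vec N) (k : Fin N) :
    v k ^ 2 ≤ S.prod x v v * (S.g x)⁻¹ k k := by
  have h := prod_sq_le hx v ((S.g x)⁻¹ *ᵥ Pi.single k 1)
  rw [prod_inv_mulVec hx, prod_inv_mulVec hx] at h
  simpa using h

lemma fderiv_eq_dotProduct_euclGrad (V : Vec N → ℝ) (x v : Vec N) :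
    fderiv ℝ V x v = v ⬝ᵥ euclGrad V x := by
  conv_lhs => rw [pi_eq_sum_univ' v]
  simp only [map_sum, map_smul, dotProduct, euclGrad, smul_eq_mul]

lemma prod_grad (hx : x ∈ S.U) (v : Vec N) : S.prod x (S.grad x) v = fderiv ℝ S.V x v := by
  rw [prod_comm hx, grad, prod_inv_mulVec hx, fderiv_eq_dotProduct_euclGrad]

lemma euclGrad_dotProduct_grad_pos (hx : x ∈ S.U) (h : euclGrad S.V x ≠ 0) :
    0 < euclGrad S.V x ⬝ᵥ S.grad x := by
  have hgrad : S.grad x ≠ 0 := fun h0 => h <| by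
    rw [← one_mulVec (euclGrad S.V x), ← g_mul_inv hx, ← mulVec_mulVec, ← grad, h0, mulVec_zero]
  rw [dotProduct_comm, ← fderiv_eq_dotProduct_euclGrad, ← prod_grad hx]
  exact S.hgpos x hx _ hgrad

end Metric

section Connection

variable {S : Setting N} {x : Vec N}

variable (S) in
/-- The partial derivative `∂ₖ gᵢⱼ` of the metric coefficients at `x`. -/
def partialG (x : Vec N) (k i j : Fin N) : ℝ :=
  fderiv ℝ (fun y => S.g y i j) x (Pi.single k 1)

variable (S) in
/-- The connection form of the Levi-Civita connection evaluated on `v`, as a matrix: its entry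
`(k, j)` is `Γᵏᵢⱼ vⁱ`, so that `Dξ/ds = ξ̇ + connMatrix γ γ̇ *ᵥ ξ` along a curve `γ`. -/
def connMatrix (x v : Vec N) : Matrix (Fin N) (Fin N) ℝ :=
  fun k j => ∑ i, S.christoffel x k i j * v i

variable (S) in
lemma covD_eq_add_connMatrix_mulVec (q q' ξ ξ' : ℝ → Vec N) (s : ℝ) :
    S.covD q q' ξ ξ' s = ξ' s + S.connMatrix (q s) (q' s) *ᵥ ξ s := by
  ext k
  simp only [covD, connMatrix, Pi.add_apply, mulVec, dotProduct, Finset.sum_mul]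
  rw [Finset.sum_comm]

variable (S) in
lemma connMatrix_smul (x v : Vec N) (c : ℝ) : S.connMatrix x (c • v) = c • S.connMatrix x v := by
  ext k j
  simp only [connMatrix, Matrix.smul_apply, Pi.smul_apply, smul_eq_mul, Finset.mul_sum]
  exact Finset.sum_congr rfl fun i _ => by ring

lemma partialG_comm (hx : x ∈ S.U) (k i j : Fin N) : S.partialG x k i j = S.partialG x k j i := by
  have hsymm : (fun y => S.g y i j) =ᶠ[𝓝 x] fun y => S.g y j i := by
    filter_upwards [S.hU.mem_nhds hx] with y hy using S.hgsymm y hy i j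
  rw [partialG, partialG, hsymm.fderiv_eq]

lemma sum_g_mul_christoffel (hx : x ∈ S.U) (l i j : Fin N) :
    ∑ m, S.g x l m * S.christoffel x m i j
      = 1 / 2 * (S.partialG x i l j + S.partialG x j l i - S.partialG x l i j) := by
  set c : Vec N := fun l => S.partialG x i l j + S.partialG x j l i - S.partialG x l i j
  change (S.g x *ᵥ ((1 / 2 : ℝ) • (S.g x)⁻¹ *ᵥ c)) l = 1 / 2 * c l
  rw [mulVec_smul, mulVec_mulVec, g_mul_inv hx, one_mulVec, Pi.smul_apply, smul_eq_mul]

lemma partialG_eq_sum_christoffel (hx : x ∈ S.U) (k i j : Fin N) :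
    S.partialG x k i j = ∑ m, S.g x i m * S.christoffel x m k j
      + ∑ m, S.g x j m * S.christoffel x m k i := by
  rw [sum_g_mul_christoffel hx, sum_g_mul_christoffel hx, partialG_comm hx k j i,
    partialG_comm hx j i k, partialG_comm hx i j k]
  ring

lemma fderiv_g_apply (hx : x ∈ S.U) (v : Vec N) (i j : Fin N) :
    fderiv ℝ (fun y => S.g y i j) x v
      = (S.g x * S.connMatrix x v + (S.g x * S.connMatrix x v)ᵀ) i j := by
  have hentry (i j : Fin N) : (S.g x * S.connMatrix x v) i j
      = ∑ k, v k * ∑ m, S.g x i m * S.christoffel x m k j := by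
    simp only [mul_apply, connMatrix, Finset.mul_sum]
    rw [Finset.sum_comm]
    exact Finset.sum_congr rfl fun k _ => Finset.sum_congr rfl fun m _ => by ring
  rw [Matrix.add_apply, transpose_apply, hentry, hentry, ← Finset.sum_add_distrib,
    fderiv_eq_dotProduct_euclGrad]
  refine Finset.sum_congr rfl fun k _ => ?_
  rw [← mul_add, ← partialG_eq_sum_christoffel hx]
  rfl

lemma contDiffAt_g (hx : x ∈ S.U) (i j : Fin N) : ContDiffAt ℝ 3 (fun y => S.g y i j) x :=
  (S.hgC i j).contDiffAt (S.hU.mem_nhds hx)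

lemma hasDerivAt_prod {q q' ξ ξ' η η' : ℝ → Vec N} {s : ℝ} (hU : q s ∈ S.U)
    (hq : HasDerivAt q (q' s) s) (hξ : HasDerivAt ξ (ξ' s) s) (hη : HasDerivAt η (η' s) s) :
    HasDerivAt (fun t => S.prod (q t) (ξ t) (η t))
      (S.prod (q s) (S.covD q q' ξ ξ' s) (η s) + S.prod (q s) (ξ s) (S.covD q q' η η' s)) s := by
  set A := S.connMatrix (q s) (q' s)
  have hg (i j : Fin N) : HasDerivAt (fun t => S.g (q t) i j)
      ((S.g (q s) * A + (S.g (q s) * A)ᵀ) i j) s := by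
    rw [← fderiv_g_apply hU]
    exact ((contDiffAt_g hU i j).differentiableAt
      three_ne_zero).hasFDerivAt.comp_hasDerivAt s hq
  have h := HasDerivAt.fun_sum (u := Finset.univ) fun i _ =>
    HasDerivAt.fun_sum (u := Finset.univ) fun j _ =>
      ((hg i j).fun_mul (hasDerivAt_pi.1 hξ i)).fun_mul (hasDerivAt_pi.1 hη j)
  have hadj (v w : Vec N) : v ⬝ᵥ Aᵀ *ᵥ w = (A *ᵥ v) ⬝ᵥ w := by
    rw [dotProduct_mulVec, vecMul_transpose]
  refine h.congr_deriv ?_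
  simp only [add_mul, Finset.sum_add_distrib, sum_mul_mul_eq_dotProduct_mulVec,
    covD_eq_add_connMatrix_mulVec, prod_eq_dotProduct, add_mulVec, mulVec_add, add_dotProduct,
    dotProduct_add, transpose_mul, transpose_g hU, ← mulVec_mulVec, hadj]
  ring

lemma hasDerivAt_prod_self {q q' ξ ξ' : ℝ → Vec N} {s : ℝ} (hU : q s ∈ S.U)
    (hq : HasDerivAt q (q' s) s) (hξ : HasDerivAt ξ (ξ' s) s) :
    HasDerivAt (fun t => S.prod (q t) (ξ t) (ξ t))
      (2 * S.prod (q s) (ξ s) (S.covD q q' ξ ξ' s)) s := by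
  refine (hasDerivAt_prod hU hq hξ hξ).congr_deriv ?_
  rw [prod_comm hU, two_mul]

end Connection

section FieldAlongCurve

variable {S : Setting N} {γ ξ : ℝ → Vec N} {a b : ℝ}

lemma continuousOn_gnorm {s : Set ℝ} (hU : MapsTo γ s S.U) (hγ : ContinuousOn γ s)
    (hξ : ContinuousOn ξ s) : ContinuousOn (fun t => S.gnorm (γ t) (ξ t)) s := by
  have hg (i j : Fin N) : ContinuousOn (fun t => S.g (γ t) i j) s :=
    (S.hgC i j).continuousOn.comp hγ hU
  have hξ (i : Fin N) : ContinuousOn (fun t => ξ t i) s := continuousOn_pi.1 hξ i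
  simp only [gnorm, prod, gP]
  exact (continuousOn_finsetSum _ fun i _ =>
    continuousOn_finsetSum _ fun j _ => ((hg i j).fun_mul (hξ i)).fun_mul (hξ j)).sqrt

lemma absolutelyContinuousOnInterval_prod_self (hU : ∀ t ∈ uIcc a b, γ t ∈ S.U)
    (hγ : ∀ t ∈ uIcc a b, ContDiffAt ℝ 1 γ t)
    (hξ : ∀ k, AbsolutelyContinuousOnInterval (fun t => ξ t k) a b) :
    AbsolutelyContinuousOnInterval (fun t => S.prod (γ t) (ξ t) (ξ t)) a b := by
  have hg (i j : Fin N) : AbsolutelyContinuousOnInterval (fun t => S.g (γ t) i j) a b :=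
    ContDiffOn.absolutelyContinuousOnInterval fun t ht =>
      (((contDiffAt_g (hU t ht) i j).of_le (by norm_num)).comp t (hγ t ht)).contDiffWithinAt
  simp only [prod, gP]
  exact absolutelyContinuousOnInterval_finsetSum _ fun i _ =>
    absolutelyContinuousOnInterval_finsetSum _ fun j _ => ((hg i j).fun_mul (hξ i)).fun_mul (hξ j)

lemma gnorm_left_le_add_integral (hab : a ≤ b) (hU : ∀ t ∈ Icc a b, γ t ∈ S.U)
    (hγ : ∀ t ∈ Icc a b, ContDiffAt ℝ 1 γ t)
    (hξ : ∀ k, AbsolutelyContinuousOnInterval (fun t => ξ t k) a b)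
    (hint : IntervalIntegrable
      (fun t => S.gnorm (γ t) (S.covD γ (deriv γ) ξ (deriv ξ) t)) volume a b) :
    S.gnorm (γ a) (ξ a) ≤ S.gnorm (γ b) (ξ b)
      + ∫ t in a..b, S.gnorm (γ t) (S.covD γ (deriv γ) ξ (deriv ξ) t) := by
  rw [← uIcc_of_le hab] at hU hγ
  have hderiv : ∀ᵐ t, t ∈ Icc a b → HasDerivAt (fun t => S.prod (γ t) (ξ t) (ξ t))
      (2 * S.prod (γ t) (ξ t) (S.covD γ (deriv γ) ξ (deriv ξ) t)) t := by
    rw [← uIcc_of_le hab]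
    filter_upwards [ae_hasDerivAt_of_absolutelyContinuousOnInterval hξ] with t hξt ht
    exact hasDerivAt_prod_self (hU t ht) ((hγ t ht).differentiableAt one_ne_zero).hasDerivAt
      (hξt ht)
  rw [uIcc_of_le hab] at hU
  refine sqrt_le_sqrt_add_integral hab
    (absolutelyContinuousOnInterval_prod_self (by rwa [uIcc_of_le hab]) hγ hξ)
    (fun t ht => prod_self_nonneg (hU t ht) _) hderiv hint (fun t _ => Real.sqrt_nonneg _)
    fun t ht => ?_
  have hcs := neg_le_of_abs_le (abs_prod_le (hU t ht) (ξ t) (S.covD γ (deriv γ) ξ (deriv ξ) t))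
  simp only [gnorm] at hcs ⊢
  linarith

lemma gnorm_le_add_setIntegral (hab : a < b) (hU : ∀ t ∈ Icc a b, γ t ∈ S.U)
    (hγ : ContinuousOn γ (Icc a b)) (hγ' : ∀ t ∈ Ioc a b, ContDiffAt ℝ 1 γ t)
    (hξ : ∀ k, AbsolutelyContinuousOnInterval (fun t => ξ t k) a b)
    (hint : IntegrableOn (fun t => S.gnorm (γ t) (S.covD γ (deriv γ) ξ (deriv ξ) t)) (Ioc a b))
    {u : ℝ} (hu : u ∈ Icc a b) :
    S.gnorm (γ u) (ξ u) ≤ S.gnorm (γ b) (ξ b)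
      + ∫ t in Ioc a b, S.gnorm (γ t) (S.covD γ (deriv γ) ξ (deriv ξ) t) := by
  have hIoc : ∀ u ∈ Ioc a b, S.gnorm (γ u) (ξ u) ≤ S.gnorm (γ b) (ξ b)
      + ∫ t in Ioc a b, S.gnorm (γ t) (S.covD γ (deriv γ) ξ (deriv ξ) t) := by
    intro u hu
    have hsub : Ioc u b ⊆ Ioc a b := Ioc_subset_Ioc_left hu.1.le
    have hle := gnorm_left_le_add_integral hu.2 (fun t ht => hU t ⟨hu.1.le.trans ht.1, ht.2⟩)
      (fun t ht => hγ' t ⟨hu.1.trans_le ht.1, ht.2⟩)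
      (fun k => (hξ k).mono (uIcc_subset_uIcc_right (Icc_subset_uIcc (Ioc_subset_Icc_self hu))))
      ((intervalIntegrable_iff_integrableOn_Ioc_of_le hu.2).2 (hint.mono_set hsub))
    rw [intervalIntegral.integral_of_le hu.2] at hle
    refine hle.trans (add_le_add_right (setIntegral_mono_set hint ?_ hsub.eventuallyLE) _)
    exact Eventually.of_forall fun t => Real.sqrt_nonneg _
  have hξc : ContinuousOn ξ (Icc a b) :=
    continuousOn_pi.2 fun k => uIcc_of_le hab.le ▸ (hξ k).continuousOn
  rw [← closure_Ioc hab.ne] at hu hU hγ hξc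
  exact (continuousOn_gnorm hU hγ hξc u hu).mono subset_closure |>.closure_le hu
    continuousWithinAt_const hIoc

lemma gnorm_le_add_sqrt_mul_sqrt {f : ℝ → ℝ} (hab : a < b) (hU : ∀ t ∈ Icc a b, γ t ∈ S.U)
    (hγ : ContinuousOn γ (Icc a b)) (hγ' : ∀ t ∈ Ioc a b, ContDiffAt ℝ 1 γ t)
    (hξ : ∀ k, AbsolutelyContinuousOnInterval (fun t => ξ t k) a b)
    (hf : ∀ t ∈ Ioc a b, 0 < f t)
    (hfD : IntegrableOn (fun t => f t * S.prod (γ t) (S.covD γ (deriv γ) ξ (deriv ξ) t)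
      (S.covD γ (deriv γ) ξ (deriv ξ) t)) (Ioc a b))
    (hfinv : IntegrableOn (fun t => (f t)⁻¹) (Ioc a b)) {u : ℝ} (hu : u ∈ Icc a b) :
    S.gnorm (γ u) (ξ u) ≤ S.gnorm (γ b) (ξ b)
      + √(∫ t in Ioc a b, f t * S.prod (γ t) (S.covD γ (deriv γ) ξ (deriv ξ) t)
          (S.covD γ (deriv γ) ξ (deriv ξ) t)) * √(∫ t in Ioc a b, (f t)⁻¹) := by
  have hpos : ∀ᵐ t ∂volume.restrict (Ioc a b), 0 < f t := by
    filter_upwards [ae_restrict_mem measurableSet_Ioc] with t ht using hf t ht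
  have hD0 : 0 ≤ᵐ[volume.restrict (Ioc a b)] fun t =>
      S.prod (γ t) (S.covD γ (deriv γ) ξ (deriv ξ) t) (S.covD γ (deriv γ) ξ (deriv ξ) t) := by
    filter_upwards [ae_restrict_mem measurableSet_Ioc] with t ht
    exact prod_self_nonneg (hU t (Ioc_subset_Icc_self ht)) _
  exact (gnorm_le_add_setIntegral hab hU hγ hγ' hξ
    (integrable_sqrt_of_weight hpos hfD hfinv) hu).trans
    (add_le_add_right (integral_sqrt_le_of_weight hD0 hpos hfD hfinv) _)

end FieldAlongCurve

section Regularity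

variable {S : Setting N} {x : Vec N}

lemma contDiffAt_V (hx : x ∈ S.U) : ContDiffAt ℝ 2 S.V x :=
  S.hVC.contDiffAt (S.hU.mem_nhds hx)

lemma continuousAt_inv_g (hx : x ∈ S.U) : ContinuousAt (fun y => (S.g y)⁻¹) x := by
  have hg : ContinuousAt S.g x :=
    continuousAt_pi.2 fun i => continuousAt_pi.2 fun j => (contDiffAt_g hx i j).continuousAt
  simp only [Matrix.inv_def, Ring.inverse_eq_inv']
  exact (((continuous_id.matrix_det).continuousAt.comp hg).inv₀ (det_g_pos hx).ne').smul
    ((continuous_id.matrix_adjugate).continuousAt.comp hg)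

lemma continuousAt_inv_g_apply (hx : x ∈ S.U) (i j : Fin N) :
    ContinuousAt (fun y => (S.g y)⁻¹ i j) x :=
  continuousAt_pi.1 (continuousAt_pi.1 (continuousAt_inv_g hx) i) j

lemma continuous_mulVec :
    Continuous fun y : Matrix (Fin N) (Fin N) ℝ × Vec N => y.1 *ᵥ y.2 :=
  continuous_fst.matrix_mulVec continuous_snd

lemma continuousAt_grad (hx : x ∈ S.U) : ContinuousAt S.grad x := by
  have hV : ContinuousAt (euclGrad S.V) x := continuousAt_pi.2 fun i =>
    ((contDiffAt_V hx).continuousAt_fderiv two_ne_zero).clm_apply continuousAt_const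
  exact continuous_mulVec.continuousAt.comp₂ (continuousAt_inv_g hx) hV

lemma continuousAt_christoffel (hx : x ∈ S.U) (k i j : Fin N) :
    ContinuousAt (fun y => S.christoffel y k i j) x := by
  have hpartial (k i j : Fin N) : ContinuousAt (fun y => S.partialG y k i j) x :=
    ((contDiffAt_g hx i j).continuousAt_fderiv three_ne_zero).clm_apply continuousAt_const
  exact continuousAt_const.mul (tendsto_finsetSum _ fun l _ => (continuousAt_inv_g_apply hx k l).mul
    (((hpartial _ _ _).add (hpartial _ _ _)).sub (hpartial _ _ _)))

variable (S) in
/-- The vector `∇V + Γ(p, p)` at `x`, which drives the momentum `p` of a geodesic of the Jacobi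
metric: `(E - V) ṗ = -momentumForce x p`. -/
def momentumForce (x p : Vec N) : Vec N := S.grad x + S.connMatrix x p *ᵥ p

lemma momentumForce_zero (x : Vec N) : S.momentumForce x 0 = S.grad x := by
  rw [momentumForce, mulVec_zero, add_zero]

lemma continuousAt_momentumForce (hx : x ∈ S.U) (p : Vec N) :
    ContinuousAt (fun y : Vec N × Vec N => S.momentumForce y.1 y.2) (x, p) := by
  have hconn : ContinuousAt (fun y : Vec N × Vec N => S.connMatrix y.1 y.2) (x, p) :=
    continuousAt_pi.2 fun k => continuousAt_pi.2 fun j => tendsto_finsetSum _ fun i _ =>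
      ((continuousAt_christoffel hx k i j).fst' (y := p)).fun_mul
        ((continuous_apply i).continuousAt.comp continuousAt_snd)
  exact ((continuousAt_grad hx).fst' (y := p)).add
    (continuous_mulVec.continuousAt.comp₂ hconn continuousAt_snd)

end Regularity

variable (S : Setting N) in
/-- The momentum `(E - V(γ)) γ̇` of a curve `γ` with respect to the Jacobi metric. -/
def momentum (γ : ℝ → Vec N) (s : ℝ) : Vec N := (S.E - S.V (γ s)) • deriv γ s

namespace IsBdryGeo

variable {S : Setting N} {γ : ℝ → Vec N} {a s : ℝ}

lemma pos (hγ : S.IsBdryGeo γ a) : 0 < a := hγ.1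

lemma continuousOn (hγ : S.IsBdryGeo γ a) : ContinuousOn γ (Icc 0 a) := hγ.2.1

lemma contDiffAt (hγ : S.IsBdryGeo γ a) (hs : s ∈ Ioc 0 a) : ContDiffAt ℝ 2 γ s := hγ.2.2.1 s hs

lemma potential_zero (hγ : S.IsBdryGeo γ a) : S.V (γ 0) = S.E := hγ.2.2.2.1

lemma sub_potential_pos (hγ : S.IsBdryGeo γ a) (hs : s ∈ Ioc 0 a) : 0 < S.E - S.V (γ s) :=
  sub_pos.2 (hγ.2.2.2.2.1 s hs)

lemma geoEqAt (hγ : S.IsBdryGeo γ a) (hs : s ∈ Ioc 0 a) :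
    S.GeoEqAt γ (deriv γ) (deriv (deriv γ)) s := hγ.2.2.2.2.2.1 s hs

lemma prod_deriv_self (hγ : S.IsBdryGeo γ a) (hs : s ∈ Ioc 0 a) :
    S.prod (γ s) (deriv γ s) (deriv γ s) = 2 * (S.E - S.V (γ s))⁻¹ := by
  rw [← div_eq_mul_inv, eq_div_iff (hγ.sub_potential_pos hs).ne']
  linarith [hγ.2.2.2.2.2.2 s hs]

lemma mem_U (hγ : S.IsBdryGeo γ a) (hs : s ∈ Icc 0 a) : γ s ∈ S.U := by
  refine S.hsub ?_
  rcases hs.1.eq_or_lt with rfl | hpos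
  · exact hγ.potential_zero.le
  · exact (sub_pos.1 (hγ.sub_potential_pos ⟨hpos, hs.2⟩)).le

lemma mono (hγ : S.IsBdryGeo γ a) (hs : s ∈ Ioc 0 a) : S.IsBdryGeo γ s := by
  obtain ⟨-, hcont, hC2, h0, hV, hgeo, hnorm⟩ := hγ
  have hsub : Ioc 0 s ⊆ Ioc 0 a := Ioc_subset_Ioc_right hs.2
  exact ⟨hs.1, hcont.mono (Icc_subset_Icc_right hs.2), fun t ht => hC2 t (hsub ht), h0,
    fun t ht => hV t (hsub ht), fun t ht => hgeo t (hsub ht), fun t ht => hnorm t (hsub ht)⟩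

lemma continuousOn_sub_potential (hγ : S.IsBdryGeo γ a) :
    ContinuousOn (fun s => S.E - S.V (γ s)) (Icc 0 a) :=
  continuousOn_const.sub (S.hVC.continuousOn.comp hγ.continuousOn fun _ hs => hγ.mem_U hs)

lemma hasDerivAt (hγ : S.IsBdryGeo γ a) (hs : s ∈ Ioc 0 a) : HasDerivAt γ (deriv γ s) s :=
  ((hγ.contDiffAt hs).differentiableAt two_ne_zero).hasDerivAt

lemma hasDerivAt_deriv (hγ : S.IsBdryGeo γ a) (hs : s ∈ Ioc 0 a) :
    HasDerivAt (deriv γ) (deriv (deriv γ) s) s := by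
  have hfderiv : DifferentiableAt ℝ (fderiv ℝ γ) s :=
    ((hγ.contDiffAt hs).fderiv_right (m := 1) (by norm_num)).differentiableAt one_ne_zero
  have happly := hfderiv.clm_apply (differentiableAt_const (1 : ℝ))
  simp only [fderiv_apply_one_eq_deriv] at happly
  exact happly.hasDerivAt

lemma hasDerivAt_sub_potential (hγ : S.IsBdryGeo γ a) (hs : s ∈ Ioc 0 a) :
    HasDerivAt (fun t => S.E - S.V (γ t)) (-fderiv ℝ S.V (γ s) (deriv γ s)) s :=
  (((contDiffAt_V (hγ.mem_U (Ioc_subset_Icc_self hs))).differentiableAt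
    two_ne_zero).hasFDerivAt.comp_hasDerivAt s (hγ.hasDerivAt hs)).const_sub _

lemma hasDerivAt_momentum (hγ : S.IsBdryGeo γ a) (hs : s ∈ Ioc 0 a) :
    HasDerivAt (S.momentum γ)
      (-((S.E - S.V (γ s))⁻¹ • S.momentumForce (γ s) (S.momentum γ s))) s := by
  refine ((hγ.hasDerivAt_sub_potential hs).smul (hγ.hasDerivAt_deriv hs)).congr_deriv ?_
  have hf := (hγ.sub_potential_pos hs).ne'
  ext k
  have hgeo := hγ.geoEqAt hs k
  rw [prod_grad (hγ.mem_U (Ioc_subset_Icc_self hs)), hγ.prod_deriv_self hs,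
    covD_eq_add_connMatrix_mulVec] at hgeo
  simp only [momentumForce, momentum, connMatrix_smul, smul_mulVec, mulVec_smul, Pi.add_apply,
    Pi.neg_apply, Pi.smul_apply, smul_eq_mul] at hgeo ⊢
  field_simp at hgeo ⊢
  linarith

lemma prod_momentum_self (hγ : S.IsBdryGeo γ a) (hs : s ∈ Icc 0 a) :
    S.prod (γ s) (S.momentum γ s) (S.momentum γ s) = 2 * (S.E - S.V (γ s)) := by
  rw [momentum, prod_eq_dotProduct, mulVec_smul, smul_dotProduct, dotProduct_smul,
    ← prod_eq_dotProduct, smul_eq_mul, smul_eq_mul]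
  rcases hs.1.eq_or_lt with rfl | hpos
  · rw [hγ.potential_zero, sub_self, zero_mul, mul_zero]
  · have hf := (hγ.sub_potential_pos ⟨hpos, hs.2⟩).ne'
    rw [hγ.prod_deriv_self ⟨hpos, hs.2⟩]
    field_simp

lemma momentum_zero (hγ : S.IsBdryGeo γ a) : S.momentum γ 0 = 0 := by
  rw [momentum, hγ.potential_zero, sub_self, zero_smul]

lemma continuousOn_momentum (hγ : S.IsBdryGeo γ a) : ContinuousOn (S.momentum γ) (Icc 0 a) := by
  intro s hs
  rcases hs.1.eq_or_lt with rfl | hpos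
  · refine continuousWithinAt_pi.2 fun k => ?_
    have hbound : ContinuousWithinAt
        (fun t => √(2 * (S.E - S.V (γ t)) * (S.g (γ t))⁻¹ k k)) (Icc 0 a) 0 :=
      ((continuousWithinAt_const.mul (hγ.continuousOn_sub_potential 0 hs)).mul
        ((continuousAt_inv_g_apply (hγ.mem_U hs) k k).comp_continuousWithinAt
          (hγ.continuousOn 0 hs))).sqrt
    simp only [ContinuousWithinAt, hγ.potential_zero, sub_self, mul_zero, zero_mul,
      Real.sqrt_zero, hγ.momentum_zero, Pi.zero_apply] at hbound ⊢
    refine squeeze_zero_norm' ?_ hbound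
    filter_upwards [self_mem_nhdsWithin] with t ht
    rw [← hγ.prod_momentum_self ht]
    exact Real.abs_le_sqrt (sq_apply_le_prod_self_mul_inv (hγ.mem_U ht) _ k)
  · exact (hγ.hasDerivAt_momentum ⟨hpos, hs.2⟩).continuousAt.continuousWithinAt

lemma continuousOn_momentumForce (hγ : S.IsBdryGeo γ a) :
    ContinuousOn (fun s => S.momentumForce (γ s) (S.momentum γ s)) (Icc 0 a) := fun s hs =>
  (continuousAt_momentumForce (hγ.mem_U hs) (S.momentum γ s)).comp_continuousWithinAt
    (f := fun t => (γ t, S.momentum γ t))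
    ((hγ.continuousOn s hs).prodMk (hγ.continuousOn_momentum s hs))

lemma integrableOn_inv_sub_potential (hγ : S.IsBdryGeo γ a) :
    IntegrableOn (fun s => (S.E - S.V (γ s))⁻¹) (Ioc 0 a) := by
  have h0 : (0 : ℝ) ∈ Icc 0 a := left_mem_Icc.2 hγ.pos.le
  set w := euclGrad S.V (γ 0)
  set G : ℝ → ℝ := fun s => w ⬝ᵥ S.momentumForce (γ s) (S.momentum γ s)
  have hG0 : 0 < G 0 := by
    simp only [G, hγ.momentum_zero, momentumForce_zero]
    exact euclGrad_dotProduct_grad_pos (hγ.mem_U h0) (S.hreg _ hγ.potential_zero)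
  have hw {p : ℝ → Vec N} (hp : ContinuousOn p (Icc 0 a)) :
      ContinuousOn (fun s => w ⬝ᵥ p s) (Icc 0 a) :=
    (continuous_const.dotProduct continuous_id).comp_continuousOn hp
  have hGev : ∀ᶠ s in 𝓝[>] 0, G 0 / 2 ≤ G s := by
    have hG : ContinuousWithinAt G (Ioc 0 a) 0 :=
      (hw hγ.continuousOn_momentumForce 0 h0).mono Ioc_subset_Icc_self
    rw [← nhdsWithin_Ioc_eq_nhdsGT hγ.pos]
    exact hG.eventually (eventually_ge_nhds (half_lt_self hG0))
  refine integrableOn_Ioc_of_hasDerivAt_mul hγ.pos (hw hγ.continuousOn_momentum).neg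
    (fun s hs => ?_) ((hγ.continuousOn_sub_potential.mono Ioc_subset_Icc_self).inv₀ fun s hs =>
      (hγ.sub_potential_pos hs).ne') (fun s hs => inv_nonneg.2 (hγ.sub_potential_pos hs).le)
    (half_pos hG0) hGev
  have hderiv : HasDerivAt (fun t => w ⬝ᵥ S.momentum γ t)
      (w ⬝ᵥ -((S.E - S.V (γ s))⁻¹ • S.momentumForce (γ s) (S.momentum γ s))) s :=
    HasDerivAt.fun_sum fun k _ => (hasDerivAt_pi.1 (hγ.hasDerivAt_momentum hs) k).const_mul (w k)
  refine hderiv.neg.congr_deriv ?_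
  rw [dotProduct_neg, neg_neg, dotProduct_smul, smul_eq_mul]

lemma integrableOn_prod_deriv_self (hγ : S.IsBdryGeo γ a) :
    IntegrableOn (fun s => S.prod (γ s) (deriv γ s) (deriv γ s)) (Ioc 0 a) :=
  IntegrableOn.congr_fun (hγ.integrableOn_inv_sub_potential.const_mul 2)
    (fun _ hs => (hγ.prod_deriv_self hs).symm) measurableSet_Ioc

lemma setIntegral_inv_sub_potential_le (hγ : S.IsBdryGeo γ a) :
    ∫ s in Ioc 0 a, (S.E - S.V (γ s))⁻¹
      ≤ ∫ s in Ioc 0 a, S.prod (γ s) (deriv γ s) (deriv γ s) := by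
  refine setIntegral_mono_on hγ.integrableOn_inv_sub_potential hγ.integrableOn_prod_deriv_self
    measurableSet_Ioc fun s hs => ?_
  rw [hγ.prod_deriv_self hs]
  linarith [inv_pos.2 (hγ.sub_potential_pos hs)]

end IsBdryGeo

end Setting

/-- **Remark 4.11**: a field with finite weighted norm along `γ|[0,s*]` is bounded,
with `‖ξ‖_∞ ≤ ‖W‖ + (∫₀^{s*}(E−V(γ))‖Dξ/ds‖²)^{1/2} (∫₀^{s*}‖γ̇‖²)^{1/2}`;
moreover `∫₀^{s*}‖γ̇‖² ds` is finite (since `‖γ̇(s)‖` behaves like `s^{−1/3}`). -/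
theorem sup_norm_bound {N : ℕ} (S : Setting N) (γ : ℝ → Vec N) (a : ℝ)
    (hγ : S.IsBdryGeo γ a) (sstar : ℝ) (hs : sstar ∈ Ioc (0:ℝ) a)
    (W : Vec N) (ξ : ℝ → Vec N)
    (hAC : ACOn ξ 0 sstar)
    (hfin : IntegrableOn (fun u => (S.E - S.V (γ u)) *
      S.prod (γ u) (S.covD γ (deriv γ) ξ (deriv ξ) u)
        (S.covD γ (deriv γ) ξ (deriv ξ) u)) (Icc 0 sstar))
    (hend : ξ sstar = W) :
    IntegrableOn (fun u => S.prod (γ u) (deriv γ u) (deriv γ u)) (Icc 0 sstar) ∧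
    ∀ u ∈ Icc 0 sstar,
      S.gnorm (γ u) (ξ u) ≤ S.gnorm (γ sstar) W
        + Real.sqrt (S.wNormSq γ sstar ξ)
          * Real.sqrt (∫ v in (0:ℝ)..sstar, S.prod (γ v) (deriv γ v) (deriv γ v)) := by
  have hγs := hγ.mono hs
  refine ⟨(integrableOn_Icc_iff_integrableOn_Ioc enorm_ne_top).2
    hγs.integrableOn_prod_deriv_self, fun u hu => ?_⟩
  have hbound := Setting.gnorm_le_add_sqrt_mul_sqrt hs.1 (fun t ht => hγs.mem_U ht)
    hγs.continuousOn (fun t ht => (hγs.contDiffAt ht).of_le one_le_two)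
    (hAC.absolutelyContinuousOnInterval hs.1.le) (fun t ht => hγs.sub_potential_pos ht)
    ((integrableOn_Icc_iff_integrableOn_Ioc enorm_ne_top).1 hfin)
    hγs.integrableOn_inv_sub_potential hu
  rw [hend, ← intervalIntegral.integral_of_le hs.1.le] at hbound
  have hspeed := hγs.setIntegral_inv_sub_potential_le
  rw [← intervalIntegral.integral_of_le (f := fun v => S.prod _ _ _) hs.1.le] at hspeed
  refine hbound.trans ?_
  rw [Setting.wNormSq]
  gcongr

end
end JacobiPaper
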